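/- Let m ≥ 1, λ ≥ 0, μ > 0, k > 0, and let g : ℝ → ℝ map [0,1] into [0,1]. For the spectral splitting define ψ(ε,d) := (g(d)+k) ψ₀⁺(ε) + ψ₀⁻(ε). Then there exist η > 0 and C > 0 such that for every d ∈ [0,1]: (i) ψ(·,d) is strongly convex with modulus η on Sᵐ, and (ii) ψ(ε,d) ≥ C‖ε‖_F² for all ε ∈ Sᵐ. -/

import Mathlib

open scoped Matrix

noncomputable section

/-- Squared Frobenius norm. -/
def frobSq {m : ℕ} (A : Matrix (Fin m) (Fin m) ℝ) : ℝ := ∑ i, ∑ j, A i j ^ 2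

/-- `ψ₀⁺(ε) = (λ/2)⟨Σᵢ Eig(ε)ᵢ⟩₊² + μ Σᵢ ⟨Eig(ε)ᵢ⟩₊²` of the spectral splitting,
extended by 0 off the set of symmetric (= real Hermitian) matrices. -/
def psiPlusSpec (m : ℕ) (lam mu : ℝ) (A : Matrix (Fin m) (Fin m) ℝ) : ℝ :=
  if h : A.IsHermitian then
    lam / 2 * max (∑ i, h.eigenvalues i) 0 ^ 2 + mu * ∑ i, max (h.eigenvalues i) 0 ^ 2
  else 0

/-- `ψ₀⁻(ε) = (λ/2)⟨Σᵢ Eig(ε)ᵢ⟩₋² + μ Σᵢ ⟨Eig(ε)ᵢ⟩₋²` of the spectral splitting,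
extended by 0 off the set of symmetric (= real Hermitian) matrices. -/
def psiMinusSpec (m : ℕ) (lam mu : ℝ) (A : Matrix (Fin m) (Fin m) ℝ) : ℝ :=
  if h : A.IsHermitian then
    lam / 2 * min (∑ i, h.eigenvalues i) 0 ^ 2 + mu * ∑ i, min (h.eigenvalues i) 0 ^ 2
  else 0

/-- The degraded density `ψ(ε,d) = (g(d)+k) ψ₀⁺(ε) + ψ₀⁻(ε)` with the spectral splitting. -/
def psiSpec (m : ℕ) (lam mu k : ℝ) (g : ℝ → ℝ) (d : ℝ) (A : Matrix (Fin m) (Fin m) ℝ) : ℝ :=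
  (g d + k) * psiPlusSpec m lam mu A + psiMinusSpec m lam mu A

/-!
Let `c = min k 1` and `w = g(d) + k ≥ c`. The profile `p(x) = w⟨x⟩₊² + ⟨x⟩₋²` satisfies
`p(x) - c x² = (w - c)⟨x⟩₊² + (1 - c)⟨x⟩₋²`, which is nonnegative and convex, and on symmetric
matrices `ψ(ε, d) = (λ/2) p(tr ε) + μ tr p(ε)`. By Peierls' inequality, evaluated in an eigenbasis
of a convex combination, `A ↦ tr φ(A)` is convex for every convex `φ`. Since `tr(ε²) = ‖ε‖_F²`, the
strong convexity of `p` and the bound `p(x) ≥ c x²` pass from `ℝ` to `Sᵐ` with the same constants.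
-/

open Set RCLike
open scoped InnerProductSpace

section RampSquares

/-- The weighted sum `a⟨x⟩₊² + b⟨x⟩₋²` of squared ramps. With `a = g(d) + k` and `b = 1` it is the
scalar profile from which `ψ(·, d)` is built. -/
def rampSq (a b x : ℝ) : ℝ := a * max x 0 ^ 2 + b * min x 0 ^ 2

lemma rampSq_nonneg {a b : ℝ} (ha : 0 ≤ a) (hb : 0 ≤ b) (x : ℝ) : 0 ≤ rampSq a b x := by
  unfold rampSq
  positivity

lemma rampSq_sub_mul_sq (a b c x : ℝ) : rampSq a b x - c * x ^ 2 = rampSq (a - c) (b - c) x := by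
  rcases le_total x 0 with hx | hx
  · simp only [rampSq, max_eq_right hx, min_eq_left hx]
    ring
  · simp only [rampSq, max_eq_left hx, min_eq_right hx]
    ring

lemma convexOn_max_zero_sq : ConvexOn ℝ univ (fun x : ℝ ↦ max x 0 ^ 2) :=
  ((convexOn_id convex_univ).sup (convexOn_const 0 convex_univ)).pow
    (fun x _ ↦ le_max_right x 0) 2

lemma convexOn_min_zero_sq : ConvexOn ℝ univ (fun x : ℝ ↦ min x 0 ^ 2) := by
  have hneg : ConvexOn ℝ univ (fun x : ℝ ↦ max (-x) 0 ^ 2) :=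
    convexOn_max_zero_sq.comp_linearMap (-LinearMap.id)
  refine hneg.congr fun x _ ↦ ?_
  rcases le_total x 0 with hx | hx <;> simp [hx]

lemma convexOn_rampSq {a b : ℝ} (ha : 0 ≤ a) (hb : 0 ≤ b) : ConvexOn ℝ univ (rampSq a b) :=
  (convexOn_max_zero_sq.smul ha).add (convexOn_min_zero_sq.smul hb)

lemma strongConvexOn_rampSq {a b c : ℝ} (hca : c ≤ a) (hcb : c ≤ b) :
    StrongConvexOn univ (2 * c) (rampSq a b) := by
  rw [strongConvexOn_iff_convex]
  refine (convexOn_rampSq (sub_nonneg.2 hca) (sub_nonneg.2 hcb)).congr fun x _ ↦ ?_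
  rw [← rampSq_sub_mul_sq, Real.norm_eq_abs, sq_abs, mul_div_cancel_left₀ c two_ne_zero]

end RampSquares

section StrongConvexity

lemma strongConvexOn_of_eqOn_add_mul {E : Type*} [NormedAddCommGroup E] [NormedSpace ℝ E]
    {s : Set E} {f p q : E → ℝ} {c r : ℝ} (hp : ConvexOn ℝ s p) (hq : StrongConvexOn s c q)
    (hr : 0 ≤ r) (hf : EqOn f (fun x ↦ p x + r * q x) s) : StrongConvexOn s (r * c) f := by
  refine ⟨hp.1, fun x hx y hy a b ha hb hab ↦ ?_⟩
  rw [hf hx, hf hy, hf (hp.1 hx hy ha hb hab)]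
  have hp_le := hp.2 hx hy ha hb hab
  have hq_le := mul_le_mul_of_nonneg_left (hq.2 hx hy ha hb hab) hr
  simp only [smul_eq_mul] at hp_le hq_le ⊢
  linarith

lemma strongConvexOn_norm_sq {E : Type*} [NormedAddCommGroup E] [InnerProductSpace ℝ E] :
    StrongConvexOn univ 2 (fun x : E ↦ ‖x‖ ^ 2) := by
  rw [strongConvexOn_iff_convex]
  simpa using convexOn_const (0 : ℝ) (convex_univ (E := E))

open scoped Matrix.Norms.Frobenius

variable {m n E : Type*} [Fintype m] [Fintype n] [NormedAddCommGroup E]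

lemma frobenius_norm_sq (A : Matrix m n E) : ‖A‖ ^ 2 = ∑ i, ∑ j, ‖A i j‖ ^ 2 := by
  rw [Matrix.frobenius_norm_def, ← Real.sqrt_eq_rpow, Real.sq_sqrt (by positivity)]
  simp only [Real.rpow_two]

lemma strongConvexOn_frobenius_norm_sq [InnerProductSpace ℝ E] :
    StrongConvexOn univ 2 (fun A : Matrix m n E ↦ ‖A‖ ^ 2) := by
  refine ⟨convex_univ, fun A _ B _ a b ha hb hab ↦ ?_⟩
  simp only [frobenius_norm_sq, smul_eq_mul, Finset.mul_sum, ← Finset.sum_add_distrib,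
    ← Finset.sum_sub_distrib]
  gcongr with i _ j _
  exact strongConvexOn_norm_sq.2 (mem_univ (A i j)) (mem_univ (B i j)) ha hb hab

end StrongConvexity

section Peierls

variable {𝕜 E ι κ : Type*} [RCLike 𝕜] [NormedAddCommGroup E] [InnerProductSpace 𝕜 E]
  [Fintype ι] [Fintype κ] {T : E →ₗ[𝕜] E} {v : OrthonormalBasis ι 𝕜 E} {eig : ι → ℝ}

lemma re_inner_map_self_eq_sum (hT : ∀ j, T (v j) = (eig j : 𝕜) • v j) (x : E) :
    re ⟪x, T x⟫_𝕜 = ∑ j, ‖⟪v j, x⟫_𝕜‖ ^ 2 * eig j := by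
  have hTx : T x = ∑ j, ⟪v j, x⟫_𝕜 • (eig j : 𝕜) • v j := by
    conv_lhs => rw [← v.sum_repr' x]
    simp only [map_sum, map_smul, hT]
  simp only [hTx, inner_sum, inner_smul_right, map_sum]
  refine Finset.sum_congr rfl fun j _ ↦ ?_
  rw [mul_left_comm, ← inner_conj_symm x (v j), RCLike.mul_conj, re_ofReal_mul, mul_comm]
  norm_cast

lemma map_re_inner_map_self_le {φ : ℝ → ℝ} (hφ : ConvexOn ℝ univ φ)
    (hT : ∀ j, T (v j) = (eig j : 𝕜) • v j) {x : E} (hx : ‖x‖ = 1) :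
    φ (re ⟪x, T x⟫_𝕜) ≤ ∑ j, ‖⟪v j, x⟫_𝕜‖ ^ 2 * φ (eig j) := by
  rw [re_inner_map_self_eq_sum hT]
  refine hφ.map_sum_le (fun j _ ↦ by positivity) ?_ fun j _ ↦ mem_univ _
  rw [v.sum_sq_norm_inner_right, hx, one_pow]

/-- **Peierls' inequality**. -/
lemma sum_map_re_inner_map_self_le {φ : ℝ → ℝ} (hφ : ConvexOn ℝ univ φ)
    (hT : ∀ j, T (v j) = (eig j : 𝕜) • v j) (b : OrthonormalBasis κ 𝕜 E) :
    ∑ i, φ (re ⟪b i, T (b i)⟫_𝕜) ≤ ∑ j, φ (eig j) :=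
  calc ∑ i, φ (re ⟪b i, T (b i)⟫_𝕜)
      ≤ ∑ i, ∑ j, ‖⟪v j, b i⟫_𝕜‖ ^ 2 * φ (eig j) :=
        Finset.sum_le_sum fun i _ ↦ map_re_inner_map_self_le hφ hT (b.norm_eq_one i)
    _ = ∑ j, (∑ i, ‖⟪v j, b i⟫_𝕜‖ ^ 2) * φ (eig j) := by
        rw [Finset.sum_comm]
        simp only [Finset.sum_mul]
    _ = ∑ j, φ (eig j) := by
        simp only [b.sum_sq_norm_inner_left, v.norm_eq_one, one_pow, one_mul]

end Peierls

section TraceFunction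

lemma convex_setOf_isHermitian {𝕜 n : Type*} [RCLike 𝕜] :
    Convex ℝ {A : Matrix n n 𝕜 | A.IsHermitian} :=
  (selfAdjoint.submodule ℝ (Matrix n n 𝕜)).convex

variable {𝕜 n : Type*} [RCLike 𝕜] [Fintype n] [DecidableEq n]

/-- The trace function `A ↦ tr φ(A)`, with `φ(A)` given by the functional calculus. On Hermitian
matrices it is the sum of `φ` over the eigenvalues (`traceFun_eq_sum`), elsewhere it is `0`. -/
def traceFun (φ : ℝ → ℝ) (A : Matrix n n 𝕜) : ℝ := re (cfc φ A).trace

lemma traceFun_eq_sum (φ : ℝ → ℝ) {A : Matrix n n 𝕜} (hA : A.IsHermitian) :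
    traceFun φ A = ∑ i, φ (hA.eigenvalues i) := by
  rw [traceFun, hA.cfc_eq, Matrix.IsHermitian.cfc, Unitary.conjStarAlgAut_apply,
    Matrix.trace_mul_cycle, Unitary.coe_star_mul_self, one_mul, Matrix.trace_diagonal]
  simp

lemma toEuclideanLin_eigenvectorBasis {A : Matrix n n 𝕜} (hA : A.IsHermitian) (j : n) :
    A.toEuclideanLin (hA.eigenvectorBasis j) = (hA.eigenvalues j : 𝕜) • hA.eigenvectorBasis j := by
  ext i
  simpa [RCLike.real_smul_eq_coe_mul] using congrFun (hA.mulVec_eigenvectorBasis j) i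

lemma eigenvalues_eq_re_inner {A : Matrix n n 𝕜} (hA : A.IsHermitian) (j : n) :
    hA.eigenvalues j =
      re ⟪hA.eigenvectorBasis j, A.toEuclideanLin (hA.eigenvectorBasis j)⟫_𝕜 := by
  rw [toEuclideanLin_eigenvectorBasis, inner_smul_right, inner_self_eq_norm_sq_to_K,
    hA.eigenvectorBasis.norm_eq_one]
  simp

lemma sum_map_re_inner_le_traceFun {φ : ℝ → ℝ} (hφ : ConvexOn ℝ univ φ) {A : Matrix n n 𝕜}
    (hA : A.IsHermitian) (v : OrthonormalBasis n 𝕜 (EuclideanSpace 𝕜 n)) :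
    ∑ i, φ (re ⟪v i, A.toEuclideanLin (v i)⟫_𝕜) ≤ traceFun φ A := by
  rw [traceFun_eq_sum φ hA]
  exact sum_map_re_inner_map_self_le hφ (toEuclideanLin_eigenvectorBasis hA) v

theorem convexOn_traceFun {φ : ℝ → ℝ} (hφ : ConvexOn ℝ univ φ) :
    ConvexOn ℝ {A : Matrix n n 𝕜 | A.IsHermitian} (traceFun φ) := by
  refine ⟨convex_setOf_isHermitian, fun A hA B hB a b ha hb hab ↦ ?_⟩
  have hC : (a • A + b • B).IsHermitian := convex_setOf_isHermitian hA hB ha hb hab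
  -- Evaluate all three quadratic forms in an eigenbasis of `a • A + b • B`.
  let v := hC.eigenvectorBasis
  let q (M : Matrix n n 𝕜) (i : n) : ℝ := re ⟪v i, M.toEuclideanLin (v i)⟫_𝕜
  have hq (i : n) : hC.eigenvalues i = a • q A i + b • q B i := by
    have hlin : (a • A + b • B).toEuclideanLin =
        (a : 𝕜) • A.toEuclideanLin + (b : 𝕜) • B.toEuclideanLin := by
      rw [map_add, RCLike.real_smul_eq_coe_smul (K := 𝕜) a, RCLike.real_smul_eq_coe_smul (K := 𝕜) b,
        map_smul, map_smul]
    rw [eigenvalues_eq_re_inner, hlin]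
    simp only [LinearMap.add_apply, LinearMap.smul_apply, inner_add_right, inner_smul_right,
      map_add, re_ofReal_mul, v, q, smul_eq_mul]
  calc traceFun φ (a • A + b • B)
      = ∑ i, φ (a • q A i + b • q B i) := by simp only [traceFun_eq_sum φ hC, hq]
    _ ≤ ∑ i, (a • φ (q A i) + b • φ (q B i)) :=
        Finset.sum_le_sum fun i _ ↦ hφ.2 (mem_univ _) (mem_univ _) ha hb hab
    _ = a • ∑ i, φ (q A i) + b • ∑ i, φ (q B i) := by
        simp only [Finset.sum_add_distrib, Finset.smul_sum]
    _ ≤ a • traceFun φ A + b • traceFun φ B := by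
        gcongr
        · exact sum_map_re_inner_le_traceFun hφ hA v
        · exact sum_map_re_inner_le_traceFun hφ hB v

open scoped Matrix.Norms.Frobenius

lemma traceFun_sq {A : Matrix n n 𝕜} (hA : A.IsHermitian) : traceFun (· ^ 2) A = ‖A‖ ^ 2 := by
  have hsq : cfc (fun x : ℝ ↦ x ^ 2) A = Aᴴ * A := by
    rw [hA.eq, ← sq]
    exact cfc_pow_id (R := ℝ) A 2 hA
  rw [traceFun, hsq, frobenius_norm_sq, Finset.sum_comm]
  simp only [Matrix.trace, Matrix.diag_apply, Matrix.mul_apply, Matrix.conjTranspose_apply,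
    RCLike.star_def, RCLike.conj_mul, map_sum]
  norm_cast

lemma traceFun_eq_add_norm_sq (φ : ℝ → ℝ) (c : ℝ) {A : Matrix n n 𝕜} (hA : A.IsHermitian) :
    traceFun φ A = traceFun (fun x ↦ φ x - c * x ^ 2) A + c * ‖A‖ ^ 2 := by
  simp [← traceFun_sq hA, traceFun_eq_sum _ hA, Finset.sum_sub_distrib, Finset.mul_sum]

lemma mul_norm_sq_le_traceFun {φ : ℝ → ℝ} {c : ℝ} (hφ : ∀ x, c * x ^ 2 ≤ φ x)
    {A : Matrix n n 𝕜} (hA : A.IsHermitian) : c * ‖A‖ ^ 2 ≤ traceFun φ A := by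
  rw [← traceFun_sq hA, traceFun_eq_sum _ hA, traceFun_eq_sum _ hA, Finset.mul_sum]
  exact Finset.sum_le_sum fun i _ ↦ hφ _

theorem strongConvexOn_traceFun {φ : ℝ → ℝ} {c : ℝ} (hc : 0 ≤ c)
    (hφ : StrongConvexOn univ c φ) :
    StrongConvexOn {A : Matrix n n 𝕜 | A.IsHermitian} c (traceFun φ) := by
  have hconv : ConvexOn ℝ univ (fun x ↦ φ x - c / 2 * x ^ 2) := by
    simpa [strongConvexOn_iff_convex] using hφ
  have hnorm : StrongConvexOn {A : Matrix n n 𝕜 | A.IsHermitian} 2 (fun A ↦ ‖A‖ ^ 2) :=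
    ⟨convex_setOf_isHermitian, fun A _ B _ ↦
      strongConvexOn_frobenius_norm_sq.2 (mem_univ A) (mem_univ B)⟩
  rw [← div_mul_cancel₀ c two_ne_zero]
  exact strongConvexOn_of_eqOn_add_mul (convexOn_traceFun hconv) hnorm (by positivity)
    fun A hA ↦ traceFun_eq_add_norm_sq φ (c / 2) hA

end TraceFunction

section Density

open scoped Matrix.Norms.Frobenius

variable {m : ℕ} {lam mu k d c : ℝ} {g : ℝ → ℝ}

lemma frobSq_eq_norm_sq (A : Matrix (Fin m) (Fin m) ℝ) : frobSq A = ‖A‖ ^ 2 := by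
  simp [frobSq, frobenius_norm_sq]

lemma le_sub_mul_frobSq_of_strongConvexOn {s : Set (Matrix (Fin m) (Fin m) ℝ)}
    {f : Matrix (Fin m) (Fin m) ℝ → ℝ} (hf : StrongConvexOn s c f)
    {A B : Matrix (Fin m) (Fin m) ℝ} (hA : A ∈ s) (hB : B ∈ s) {t : ℝ} (ht : t ∈ Icc (0 : ℝ) 1) :
    f (t • A + (1 - t) • B) ≤
      t * f A + (1 - t) * f B - c / 2 * (t * (1 - t)) * frobSq (A - B) := by
  have hle := hf.2 hA hB ht.1 (sub_nonneg.2 ht.2) (add_sub_cancel t 1)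
  simp only [← frobSq_eq_norm_sq, smul_eq_mul] at hle
  linarith

lemma psiSpec_eq_rampSq_trace_add_traceFun (lam mu k d : ℝ) (g : ℝ → ℝ)
    {A : Matrix (Fin m) (Fin m) ℝ} (hA : A.IsHermitian) :
    psiSpec m lam mu k g d A =
      lam / 2 * rampSq (g d + k) 1 A.trace + mu * traceFun (rampSq (g d + k) 1) A := by
  have htrace : A.trace = ∑ i, hA.eigenvalues i := by simpa using hA.trace_eq_sum_eigenvalues
  simp only [psiSpec, psiPlusSpec, psiMinusSpec, dif_pos hA, htrace, traceFun_eq_sum _ hA, rampSq,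
    Finset.sum_add_distrib, ← Finset.mul_sum]
  ring

theorem strongConvexOn_psiSpec (hlam : 0 ≤ lam) (hmu : 0 ≤ mu) (hc : 0 ≤ c) (hcg : c ≤ g d + k)
    (hc1 : c ≤ 1) :
    StrongConvexOn {A : Matrix (Fin m) (Fin m) ℝ | A.IsHermitian} (mu * (2 * c))
      (psiSpec m lam mu k g d) := by
  have htrace : ConvexOn ℝ {A : Matrix (Fin m) (Fin m) ℝ | A.IsHermitian}
      (fun A ↦ lam / 2 * rampSq (g d + k) 1 A.trace) :=
    (((convexOn_rampSq (hc.trans hcg) zero_le_one).comp_linearMap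
      (Matrix.traceLinearMap (Fin m) ℝ ℝ)).subset
        (subset_univ _) convex_setOf_isHermitian).smul (by positivity)
  exact strongConvexOn_of_eqOn_add_mul htrace
    (strongConvexOn_traceFun (by positivity) (strongConvexOn_rampSq hcg hc1)) hmu
    fun A hA ↦ psiSpec_eq_rampSq_trace_add_traceFun lam mu k d g hA

theorem mul_frobSq_le_psiSpec (hlam : 0 ≤ lam) (hmu : 0 ≤ mu) (hc : 0 ≤ c) (hcg : c ≤ g d + k)
    (hc1 : c ≤ 1) {A : Matrix (Fin m) (Fin m) ℝ} (hA : A.IsHermitian) :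
    mu * c * frobSq A ≤ psiSpec m lam mu k g d A := by
  have hramp (x : ℝ) : c * x ^ 2 ≤ rampSq (g d + k) 1 x := by
    rw [← sub_nonneg, rampSq_sub_mul_sq]
    exact rampSq_nonneg (sub_nonneg.2 hcg) (sub_nonneg.2 hc1) x
  have htrace : 0 ≤ lam / 2 * rampSq (g d + k) 1 A.trace :=
    mul_nonneg (by positivity) (rampSq_nonneg (hc.trans hcg) zero_le_one _)
  have heig : mu * (c * ‖A‖ ^ 2) ≤ mu * traceFun (rampSq (g d + k) 1) A :=
    mul_le_mul_of_nonneg_left (mul_norm_sq_le_traceFun hramp hA) hmu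
  rw [psiSpec_eq_rampSq_trace_add_traceFun lam mu k d g hA, frobSq_eq_norm_sq, mul_assoc]
  linarith

end Density

theorem stmt_11_general (mu k : ℝ) (hmu : 0 < mu) (hk : 0 < k) :
    ∃ η > (0 : ℝ), ∃ C > (0 : ℝ),
      ∀ (m : ℕ) (lam : ℝ), 0 ≤ lam → ∀ (g : ℝ → ℝ) (d : ℝ), 0 ≤ g d →
      (∀ A B : Matrix (Fin m) (Fin m) ℝ, A.IsHermitian → B.IsHermitian →
        ∀ t ∈ Set.Icc (0 : ℝ) 1,
          psiSpec m lam mu k g d (t • A + (1 - t) • B)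
            ≤ t * psiSpec m lam mu k g d A + (1 - t) * psiSpec m lam mu k g d B
              - η / 2 * (t * (1 - t)) * frobSq (A - B)) ∧
      (∀ ε : Matrix (Fin m) (Fin m) ℝ, ε.IsHermitian →
        C * frobSq ε ≤ psiSpec m lam mu k g d ε) := by
  have hc : 0 < min k 1 := lt_min hk one_pos
  refine ⟨mu * (2 * min k 1), by positivity, mu * min k 1, by positivity,
    fun m lam hlam g d hgd ↦ ?_⟩
  have hcg : min k 1 ≤ g d + k := (min_le_left k 1).trans (le_add_of_nonneg_left hgd)
  have hc1 : min k 1 ≤ 1 := min_le_right k 1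
  exact ⟨fun A B hA hB t ht ↦ le_sub_mul_frobSq_of_strongConvexOn
      (strongConvexOn_psiSpec hlam hmu.le hc.le hcg hc1) hA hB ht,
    fun ε hε ↦ mul_frobSq_le_psiSpec hlam hmu.le hc.le hcg hc1 hε⟩

theorem stmt_11 (m : ℕ) (hm : 1 ≤ m) (lam mu : ℝ) (hlam : 0 ≤ lam) (hmu : 0 < mu)
    (k : ℝ) (hk : 0 < k)
    (g : ℝ → ℝ) (hg : Set.MapsTo g (Set.Icc 0 1) (Set.Icc 0 1)) :
    ∃ η > (0 : ℝ), ∃ C > (0 : ℝ), ∀ d ∈ Set.Icc (0 : ℝ) 1,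
      -- (i) strong convexity with modulus η on Sᵐ
      (∀ A B : Matrix (Fin m) (Fin m) ℝ, A.IsHermitian → B.IsHermitian →
        ∀ t ∈ Set.Icc (0 : ℝ) 1,
          psiSpec m lam mu k g d (t • A + (1 - t) • B)
            ≤ t * psiSpec m lam mu k g d A + (1 - t) * psiSpec m lam mu k g d B
              - η / 2 * (t * (1 - t)) * frobSq (A - B)) ∧
      -- (ii) coercivity uniformly in d
      (∀ ε : Matrix (Fin m) (Fin m) ℝ, ε.IsHermitian →
        C * frobSq ε ≤ psiSpec m lam mu k g d ε) := by
  obtain ⟨η, hη, C, hC, h⟩ := stmt_11_general mu k hmu hk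
  exact ⟨η, hη, C, hC, fun d hd ↦ h m lam hlam g d (hg hd).1⟩
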